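/- Integrated vacuum control: assume there exist c > 0, δ > 0 and γ ≥ 2 such that p_e(τ) ≥ c τ^{−γ} for all τ ∈ (0, δ). Let τ_L, τ_R, ϑ_L, ϑ_R > 0 and set (τ̄, ϑ̄)(x) = (τ_L, ϑ_L) for x < 0 and (τ_R, ϑ_R) for x > 0. Then there exist constants C₁ > 0 and C > 0 such that for every ε > 0 and every measurable τ : ℝ → (0,∞) for which the function x ↦ ϑ̄(x)(P_ϑ(τ(x)) − P_ϑ(τ̄(x)) + p_ϑ(τ̄(x))(τ(x) − τ̄(x))) + (P_e(τ(x)) − P_e(τ̄(x)) + p_e(τ̄(x))(τ(x) − τ̄(x))) is integrable on ℝ, one has ∫_{−ε}^{ε} (1/τ(x)) dx ≤ 2 C₁ ε + C ∫_ℝ [ ϑ̄(x)(P_ϑ(τ(x)) − P_ϑ(τ̄(x)) + p_ϑ(τ̄(x))(τ(x) − τ̄(x))) + (P_e(τ(x)) − P_e(τ̄(x)) + p_e(τ̄(x))(τ(x) − τ̄(x))) ] dx. -/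

import Mathlib

open Set MeasureTheory

/-!
The pressures are nonincreasing, so the potentials are convex and both relative potentials are
nonnegative. The thermal one can therefore be discarded pointwise. Fix `d < min δ 1` below every
reference value `t`. For `s ≥ d` we have `1 / s ≤ 1 / d`. For `s ≤ d` the relative potential of `s`
with respect to `t` dominates the one with respect to `d`, and integrating `c x⁻² ≤ pe x` over
`[s, d]` bounds the latter below by `c / s` minus a constant depending only on `d`. Hence
`1 / τ` is at most a constant plus `c⁻¹` times the density, and it remains to integrate.
-/

/-- The relative potential of `s` with respect to the reference value `t`: the remainder of the
first-order Taylor expansion of `P` at `t`. The pressure `p` stands for `-P'`, which is the reason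
for the plus sign; it is a separate argument so that no value of `deriv` is involved. -/
def relativePotential (P p : ℝ → ℝ) (s t : ℝ) : ℝ :=
  P s - P t + p t * (s - t)

section RelativePotential

variable {P p : ℝ → ℝ} {S : Set ℝ} {s t d : ℝ}

theorem convexOn_of_antitoneOn_neg_deriv (hS : Convex ℝ S) (hp : AntitoneOn p S)
    (hP : ∀ x ∈ S, HasDerivAt P (-(p x)) x) : ConvexOn ℝ S P := by
  have hderiv : MonotoneOn (deriv P) S := fun x hx y hy hxy => by
    rw [(hP x hx).deriv, (hP y hy).deriv]
    exact neg_le_neg (hp hx hy hxy)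
  exact (hderiv.mono interior_subset).convexOn_of_deriv hS
    (fun x hx => (hP x hx).continuousAt.continuousWithinAt)
    (fun x hx => (hP x (interior_subset hx)).differentiableAt.differentiableWithinAt)

theorem relativePotential_nonneg_of_convexOn (hconv : ConvexOn ℝ S P) (hs : s ∈ S) (ht : t ∈ S)
    (hPt : HasDerivAt P (-(p t)) t) : 0 ≤ relativePotential P p s t := by
  unfold relativePotential
  rcases lt_trichotomy s t with hst | rfl | hts
  · have hslope := hconv.slope_le_of_hasDerivAt hs ht hst hPt
    rw [slope_def_field, div_le_iff₀ (sub_pos.2 hst)] at hslope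
    linarith
  · simp
  · have hslope := hconv.le_slope_of_hasDerivAt ht hs hts hPt
    rw [slope_def_field, le_div_iff₀ (sub_pos.2 hts)] at hslope
    linarith

theorem relativePotential_three_point (P p : ℝ → ℝ) (s d t : ℝ) :
    relativePotential P p s t =
      relativePotential P p s d + relativePotential P p d t + (p d - p t) * (d - s) := by
  unfold relativePotential
  ring

theorem relativePotential_le_relativePotential_of_le (hconv : ConvexOn ℝ S P)
    (hp : AntitoneOn p S) (hPt : HasDerivAt P (-(p t)) t) (hd : d ∈ S) (ht : t ∈ S)
    (hsd : s ≤ d) (hdt : d ≤ t) : relativePotential P p s d ≤ relativePotential P p s t := by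
  have hremainder : 0 ≤ relativePotential P p d t :=
    relativePotential_nonneg_of_convexOn hconv hd ht hPt
  have hcross : 0 ≤ (p d - p t) * (d - s) :=
    mul_nonneg (sub_nonneg.2 (hp hd ht hdt)) (sub_nonneg.2 hsd)
  rw [relativePotential_three_point P p s d t]
  linarith

end RelativePotential

section PointwiseVacuumControl

variable {P p : ℝ → ℝ} {c d : ℝ}

theorem inv_sq_le_rpow_neg {x γ : ℝ} (hx : 0 < x) (hx1 : x ≤ 1) (hγ : 2 ≤ γ) :
    (x ^ 2)⁻¹ ≤ x ^ (-γ) := by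
  rw [← Real.rpow_two, ← Real.rpow_neg hx.le]
  exact Real.rpow_le_rpow_of_exponent_ge hx hx1 (neg_le_neg hγ)

theorem mul_inv_sub_inv_le_sub_of_mul_inv_sq_le (hP : ∀ x ∈ Ioc 0 d, HasDerivAt P (-(p x)) x)
    (hgrowth : ∀ x ∈ Ioo 0 d, c * (x ^ 2)⁻¹ ≤ p x) {s : ℝ} (hs : 0 < s) (hsd : s ≤ d) :
    c * (s⁻¹ - d⁻¹) ≤ P s - P d := by
  have hderiv : ∀ x ∈ Ioc 0 d,
      HasDerivAt (fun x => P x - c * x⁻¹) (-(p x) - c * -(x ^ 2)⁻¹) x :=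
    fun x hx => (hP x hx).sub ((hasDerivAt_inv hx.1.ne').const_mul c)
  have hanti : AntitoneOn (fun x => P x - c * x⁻¹) (Ioc 0 d) := by
    refine antitoneOn_of_hasDerivWithinAt_nonpos (convex_Ioc 0 d)
      (fun x hx => (hderiv x hx).continuousAt.continuousWithinAt)
      (fun x hx => (hderiv x (interior_subset hx)).hasDerivWithinAt) fun x hx => ?_
    rw [interior_Ioc] at hx
    linarith [hgrowth x hx]
  have hle : P d - c * d⁻¹ ≤ P s - c * s⁻¹ := hanti ⟨hs, hsd⟩ ⟨hs.trans_le hsd, le_rfl⟩ hsd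
  linarith

theorem mul_inv_le_add_relativePotential (hP : ∀ x ∈ Ioc 0 d, HasDerivAt P (-(p x)) x)
    (hgrowth : ∀ x ∈ Ioo 0 d, c * (x ^ 2)⁻¹ ≤ p x) (hpd : 0 ≤ p d) {s : ℝ} (hs : 0 < s)
    (hsd : s ≤ d) : c * s⁻¹ ≤ c * d⁻¹ + p d * d + relativePotential P p s d := by
  have hpotential : c * (s⁻¹ - d⁻¹) ≤ P s - P d :=
    mul_inv_sub_inv_le_sub_of_mul_inv_sq_le hP hgrowth hs hsd
  have hlinear : 0 ≤ p d * s := mul_nonneg hpd hs.le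
  unfold relativePotential
  linarith

theorem inv_le_add_mul_relativePotential (hp : AntitoneOn p (Ioi 0))
    (hP : ∀ x > 0, HasDerivAt P (-(p x)) x) (hc : 0 < c) (hd : 0 < d)
    (hgrowth : ∀ x ∈ Ioc 0 d, c * (x ^ 2)⁻¹ ≤ p x) {s t : ℝ} (hs : 0 < s) (hdt : d ≤ t) :
    s⁻¹ ≤ d⁻¹ + c⁻¹ * (p d * d) + c⁻¹ * relativePotential P p s t := by
  have hconv : ConvexOn ℝ (Ioi 0) P := convexOn_of_antitoneOn_neg_deriv (convex_Ioi 0) hp hP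
  have ht : 0 < t := hd.trans_le hdt
  have hpd : 0 ≤ p d := le_trans (by positivity) (hgrowth d ⟨hd, le_rfl⟩)
  rcases le_total d s with hds | hsd
  · have hinv : s⁻¹ ≤ d⁻¹ := inv_anti₀ hd hds
    have hconst : 0 ≤ c⁻¹ * (p d * d) := by positivity
    have hpot : 0 ≤ c⁻¹ * relativePotential P p s t :=
      mul_nonneg (by positivity) (relativePotential_nonneg_of_convexOn hconv hs ht (hP t ht))
    linarith
  · have hbase : c * s⁻¹ ≤ c * d⁻¹ + p d * d + relativePotential P p s d :=
      mul_inv_le_add_relativePotential (fun x hx => hP x hx.1)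
        (fun x hx => hgrowth x (Ioo_subset_Ioc_self hx)) hpd hs hsd
    have hmono : relativePotential P p s d ≤ relativePotential P p s t :=
      relativePotential_le_relativePotential_of_le hconv hp (hP t ht) hd ht hsd hdt
    calc s⁻¹ = c⁻¹ * (c * s⁻¹) := (inv_mul_cancel_left₀ hc.ne' _).symm
      _ ≤ c⁻¹ * (c * d⁻¹ + p d * d + relativePotential P p s t) := by gcongr; linarith
      _ = d⁻¹ + c⁻¹ * (p d * d) + c⁻¹ * relativePotential P p s t := by field_simp

theorem exists_inv_le_add_mul_relativePotential (hp : AntitoneOn p (Ioi 0))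
    (hP : ∀ x > 0, HasDerivAt P (-(p x)) x) {δ γ a : ℝ} (hc : 0 < c) (hδ : 0 < δ) (hγ : 2 ≤ γ)
    (hgrowth : ∀ x ∈ Ioo 0 δ, c * x ^ (-γ) ≤ p x) (ha : 0 < a) :
    ∃ M > 0, ∀ s > 0, ∀ t ≥ a, s⁻¹ ≤ M + c⁻¹ * relativePotential P p s t := by
  obtain ⟨d, hd, hdmin⟩ : ∃ d, 0 < d ∧ d < min δ (min 1 a) := exists_between (by positivity)
  obtain ⟨hdδ, hd1, hda⟩ : d < δ ∧ d < 1 ∧ d < a := by simpa only [lt_min_iff] using hdmin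
  have hgrowth_sq : ∀ x ∈ Ioc 0 d, c * (x ^ 2)⁻¹ ≤ p x := fun x hx =>
    (mul_le_mul_of_nonneg_left (inv_sq_le_rpow_neg hx.1 (hx.2.trans hd1.le) hγ) hc.le).trans
      (hgrowth x ⟨hx.1, hx.2.trans_lt hdδ⟩)
  have hpd : 0 ≤ p d := le_trans (by positivity) (hgrowth_sq d ⟨hd, le_rfl⟩)
  exact ⟨d⁻¹ + c⁻¹ * (p d * d), by positivity, fun s hs t hat =>
    inv_le_add_mul_relativePotential hp hP hc hd hgrowth_sq hs (hda.le.trans hat)⟩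

end PointwiseVacuumControl

theorem integrableOn_and_setIntegral_le_of_le_add_mul {α : Type*} [MeasurableSpace α]
    {μ : Measure α} {A : Set α} {f F : α → ℝ} {M C : ℝ} (hA : μ A ≠ ⊤)
    (hfm : AEStronglyMeasurable f (μ.restrict A)) (hf : ∀ x, 0 ≤ f x) (hF : ∀ x, 0 ≤ F x)
    (hFi : Integrable F μ) (hC : 0 ≤ C) (hle : ∀ x, f x ≤ M + C * F x) :
    IntegrableOn f A μ ∧ ∫ x in A, f x ∂μ ≤ M * μ.real A + C * ∫ x, F x ∂μ := by
  have hM : IntegrableOn (fun _ => M) A μ := integrableOn_const hA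
  have hCF : IntegrableOn (fun x => C * F x) A μ := (hFi.const_mul C).integrableOn
  have hfi : IntegrableOn f A μ := (hM.add hCF).mono' hfm <|
    .of_forall fun x => (Real.norm_of_nonneg (hf x)).trans_le (hle x)
  refine ⟨hfi, ?_⟩
  calc ∫ x in A, f x ∂μ ≤ ∫ x in A, (M + C * F x) ∂μ := setIntegral_mono hfi (hM.add hCF) hle
    _ = M * μ.real A + C * ∫ x in A, F x ∂μ := by
        rw [integral_add hM hCF, integral_const_mul, setIntegral_const, smul_eq_mul, mul_comm M]
    _ ≤ M * μ.real A + C * ∫ x, F x ∂μ := by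
        gcongr _ + C * ?_
        exact setIntegral_le_integral hFi (.of_forall hF)

theorem antitoneOn_of_differentiableOn_of_deriv_nonpos {f : ℝ → ℝ} {S : Set ℝ}
    (hS : Convex ℝ S) (hf : DifferentiableOn ℝ f S) (hf' : ∀ x ∈ S, deriv f x ≤ 0) :
    AntitoneOn f S :=
  antitoneOn_of_deriv_nonpos hS hf.continuousOn (hf.mono interior_subset)
    fun x hx => hf' x (interior_subset hx)

theorem integrated_vacuum_control_general
    (pe pθ Pe Pθ : ℝ → ℝ) (hpe : AntitoneOn pe (Ioi 0)) (hpθ : AntitoneOn pθ (Ioi 0))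
    (hPe : ∀ τ > (0 : ℝ), HasDerivAt Pe (-(pe τ)) τ)
    (hPθ : ∀ τ > (0 : ℝ), HasDerivAt Pθ (-(pθ τ)) τ)
    (c δ γ : ℝ) (hc : 0 < c) (hδ : 0 < δ) (hγ : 2 ≤ γ)
    (hgrowth : ∀ τ ∈ Ioo (0 : ℝ) δ, c * τ ^ (-γ) ≤ pe τ)
    (a : ℝ) (ha : 0 < a) (τb ϑb : ℝ → ℝ) (hτb : ∀ x, a ≤ τb x) (hϑb : ∀ x, 0 ≤ ϑb x) :
    ∃ C₁ > (0 : ℝ), ∃ C > (0 : ℝ), ∀ ε > (0 : ℝ), ∀ τ : ℝ → ℝ, Measurable τ → (∀ x, 0 < τ x) →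
      Integrable (fun x => ϑb x * relativePotential Pθ pθ (τ x) (τb x)
        + relativePotential Pe pe (τ x) (τb x)) →
      IntervalIntegrable (fun x => 1 / τ x) volume (-ε) ε ∧
        (∫ x in (-ε)..ε, 1 / τ x) ≤ 2 * C₁ * ε + C * ∫ x : ℝ,
          (ϑb x * relativePotential Pθ pθ (τ x) (τb x)
            + relativePotential Pe pe (τ x) (τb x)) := by
  obtain ⟨M, hM, hinv⟩ := exists_inv_le_add_mul_relativePotential hpe hPe hc hδ hγ hgrowth ha
  refine ⟨M, hM, c⁻¹, inv_pos.2 hc, fun ε hε τ hτm hτ hint => ?_⟩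
  have hnonneg : ∀ {P p : ℝ → ℝ}, AntitoneOn p (Ioi 0) → (∀ x > 0, HasDerivAt P (-(p x)) x) →
      ∀ x, 0 ≤ relativePotential P p (τ x) (τb x) := fun hp hP x =>
    have hτbx : 0 < τb x := ha.trans_le (hτb x)
    relativePotential_nonneg_of_convexOn (convexOn_of_antitoneOn_neg_deriv (convex_Ioi 0) hp hP)
      (hτ x) hτbx (hP _ hτbx)
  have hthermal : ∀ x, 0 ≤ ϑb x * relativePotential Pθ pθ (τ x) (τb x) := fun x =>
    mul_nonneg (hϑb x) (hnonneg hpθ hPθ x)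
  have hpointwise : ∀ x, 1 / τ x ≤ M + c⁻¹ * (ϑb x * relativePotential Pθ pθ (τ x) (τb x)
      + relativePotential Pe pe (τ x) (τb x)) := fun x => by
    rw [one_div]
    refine (hinv (τ x) (hτ x) (τb x) (hτb x)).trans ?_
    gcongr
    exact le_add_of_nonneg_left (hthermal x)
  have hvolume : volume.real (Ioc (-ε) ε) = 2 * ε := by
    rw [Real.volume_real_Ioc_of_le (by linarith)]
    ring
  rw [intervalIntegrable_iff_integrableOn_Ioc_of_le (by linarith),
    intervalIntegral.integral_of_le (by linarith), mul_comm 2 M, mul_assoc, ← hvolume]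
  exact integrableOn_and_setIntegral_le_of_le_add_mul measure_Ioc_lt_top.ne
    (hτm.const_div 1).aestronglyMeasurable (fun x => (one_div_pos.2 (hτ x)).le)
    (fun x => add_nonneg (hthermal x) (hnonneg hpe hPe x)) hint (inv_pos.2 hc).le hpointwise

/-- **Integrated vacuum control.**
Assume p_e(τ) ≥ c τ^{−γ} on (0,δ) with c, δ > 0, γ ≥ 2.  Let τ_L, τ_R, ϑ_L, ϑ_R > 0
and let (τ̄, ϑ̄)(x) = (τ_L, ϑ_L) for x < 0, (τ_R, ϑ_R) for x > 0.  Then there are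
constants C₁ > 0, C > 0 such that for every ε > 0 and every measurable
τ : ℝ → (0,∞) for which the weighted pressure Bregman density is integrable,
∫_{−ε}^{ε} 1/τ ≤ 2 C₁ ε + C ∫_ℝ [ϑ̄ (P_ϑ(τ) − P_ϑ(τ̄) + p_ϑ(τ̄)(τ − τ̄))
                                   + (P_e(τ) − P_e(τ̄) + p_e(τ̄)(τ − τ̄))]. -/
theorem integrated_vacuum_control
    (pe pθ Pe Pθ : ℝ → ℝ)
    (hpeC1 : ContDiffOn ℝ 1 pe (Ioi 0)) (hpθC1 : ContDiffOn ℝ 1 pθ (Ioi 0))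
    (hpe_nonneg : ∀ τ > (0:ℝ), 0 ≤ pe τ) (hpθ_nonneg : ∀ τ > (0:ℝ), 0 ≤ pθ τ)
    (hpe_mono : ∀ τ > (0:ℝ), deriv pe τ ≤ 0) (hpθ_mono : ∀ τ > (0:ℝ), deriv pθ τ ≤ 0)
    (hPe : ∀ τ > (0:ℝ), HasDerivAt Pe (-(pe τ)) τ)
    (hPθ : ∀ τ > (0:ℝ), HasDerivAt Pθ (-(pθ τ)) τ)
    (c δ γ : ℝ) (hc : 0 < c) (hδ : 0 < δ) (hγ : 2 ≤ γ)
    (hgrowth : ∀ τ ∈ Ioo (0:ℝ) δ, c * τ ^ (-γ) ≤ pe τ)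
    (τL τR ϑL ϑR : ℝ) (hτL : 0 < τL) (hτR : 0 < τR) (hϑL : 0 < ϑL) (hϑR : 0 < ϑR)
    (τb ϑb : ℝ → ℝ)
    (hτbdef : ∀ x : ℝ, τb x = if x < 0 then τL else τR)
    (hϑbdef : ∀ x : ℝ, ϑb x = if x < 0 then ϑL else ϑR) :
    ∃ C₁ > (0:ℝ), ∃ C > (0:ℝ), ∀ ε > (0:ℝ), ∀ τ : ℝ → ℝ,
      Measurable τ → (∀ x, 0 < τ x) →
      Integrable (fun x =>
        ϑb x * (Pθ (τ x) - Pθ (τb x) + pθ (τb x) * (τ x - τb x))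
          + (Pe (τ x) - Pe (τb x) + pe (τb x) * (τ x - τb x))) →
      (∫ x in (-ε)..ε, 1 / τ x)
        ≤ 2 * C₁ * ε + C * ∫ x : ℝ,
            (ϑb x * (Pθ (τ x) - Pθ (τb x) + pθ (τb x) * (τ x - τb x))
              + (Pe (τ x) - Pe (τb x) + pe (τb x) * (τ x - τb x))) := by
  obtain ⟨C₁, hC₁, C, hC, hbound⟩ := integrated_vacuum_control_general pe pθ Pe Pθ
    (antitoneOn_of_differentiableOn_of_deriv_nonpos (convex_Ioi 0)
      (hpeC1.differentiableOn one_ne_zero) hpe_mono)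
    (antitoneOn_of_differentiableOn_of_deriv_nonpos (convex_Ioi 0)
      (hpθC1.differentiableOn one_ne_zero) hpθ_mono)
    hPe hPθ c δ γ hc hδ hγ hgrowth (min τL τR) (lt_min hτL hτR) τb ϑb
    (fun x => by rw [hτbdef]; split_ifs <;> simp)
    (fun x => by rw [hϑbdef]; split_ifs <;> positivity)
  exact ⟨C₁, hC₁, C, hC, fun ε hε τ hτm hτ hint => (hbound ε hε τ hτm hτ hint).2⟩
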